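/- arXiv:2205.15564 — 2 statements merged into one kernel-verified Lean document; each statement's English description precedes it below -/
import Mathlib

section
/- (Data t-privacy of SecFC, distributional form.) Fix data x = (x_1,…,x_ℓ) ∈ 𝔽_q^ℓ and a subset C ⊆ {1,…,n} with |C| ≤ t. If the noise vector z is drawn from the uniform probability distribution on 𝔽_q^t, then the distribution of the share tuple (f_{x,z}(α_j))_{j∈C} is the uniform distribution on 𝔽_q^C; in particular, this distribution is the same for every choice of the data vector x, so the shares of up to t colluding clients reveal no information about x. -/
open Polynomial

/-- The Lagrange/LCC encoding polynomial of data `x` and noise `z`. -/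
noncomputable def lccEncode {F : Type*} [Field F] {ℓ t : ℕ} (β : Fin (ℓ + t) → F)
    (x : Fin ℓ → F) (z : Fin t → F) : F[X] :=
  Lagrange.interpolate Finset.univ β (Fin.append x z)

/-!
A polynomial of degree less than `ℓ + t` may be prescribed freely at the `ℓ` data nodes and at up
to `t` further nodes, and its values at the noise nodes then recover it as an encoding. Hence every
tuple of shares occurs, whatever the data. Since the shares are an affine function of the noise,
all tuples have equally many preimages.
-/

section UniformPMF

open scoped Finset

theorem pmf_eq_uniformOfFintype {Ω : Type*} [Fintype Ω] [Nonempty Ω] (p : PMF Ω)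
    (hp : ∀ a b, p a = p b) : p = PMF.uniformOfFintype Ω := by
  ext a
  have total : p a * Fintype.card Ω = 1 := by
    calc p a * Fintype.card Ω = ∑ b, p b := by
          simp only [hp _ a, Finset.sum_const, Finset.card_univ, nsmul_eq_mul, mul_comm]
      _ = 1 := (tsum_fintype (L := .unconditional Ω) p).symm.trans p.tsum_coe
  rw [PMF.uniformOfFintype_apply]
  exact ENNReal.eq_inv_of_mul_eq_one_left total

theorem map_uniformOfFintype_apply {Ω Ω' : Type*} [Fintype Ω] [Nonempty Ω] [DecidableEq Ω']
    (f : Ω → Ω') (b : Ω') :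
    PMF.map f (PMF.uniformOfFintype Ω) b = #{a | f a = b} * (Fintype.card Ω : ENNReal)⁻¹ := by
  simp only [PMF.map_apply, PMF.uniformOfFintype_apply, tsum_fintype, eq_comm (a := b),
    ← Finset.sum_filter, Finset.sum_const, nsmul_eq_mul]

theorem map_const_add_uniformOfFintype {G H : Type*} [AddGroup G] [Fintype G] [AddGroup H]
    [Fintype H] (φ : G →+ H) (hφ : Function.Surjective φ) (c : H) :
    PMF.map (fun g => c + φ g) (PMF.uniformOfFintype G) = PMF.uniformOfFintype H := by
  classical
  refine pmf_eq_uniformOfFintype _ fun a b => ?_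
  have card_fiber : #{g | c + φ g = a} = #{g | c + φ g = b} := by
    simp only [← eq_neg_add_iff_add_eq]
    exact AddMonoidHom.card_fiber_eq_of_mem_range φ (hφ _) (hφ _)
  rw [map_uniformOfFintype_apply, map_uniformOfFintype_apply, card_fiber]

end UniformPMF

section Encoding

variable {F : Type*} [Field F] {ℓ t : ℕ} (β : Fin (ℓ + t) → F)

theorem append_add_append {M : Type*} [Add M] (x y : Fin ℓ → M) (z w : Fin t → M) :
    Fin.append x z + Fin.append y w = Fin.append (x + y) (z + w) := by
  ext i
  cases i using Fin.addCases <;> simp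

theorem lccEncode_add (x y : Fin ℓ → F) (z w : Fin t → F) :
    lccEncode β (x + y) (z + w) = lccEncode β x z + lccEncode β y w := by
  simp only [lccEncode, ← append_add_append, map_add]

variable {β}

theorem lccEncode_eval_nodes (hβ : Function.Injective β) {p : F[X]}
    (hp : p.degree < (ℓ + t : ℕ)) :
    lccEncode β (fun u => p.eval (β (Fin.castAdd t u))) (fun u => p.eval (β (Fin.natAdd ℓ u)))
      = p := by
  refine (Lagrange.eq_interpolate_of_eval_eq _ hβ.injOn (by simpa using hp) fun i _ => ?_).symm
  cases i using Fin.addCases <;> simp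

variable {κ : Type*} {α : κ → F}

theorem exists_noise_eval_lccEncode_eq [Fintype κ] (hβ : Function.Injective β)
    (hα : Function.Injective α) (hαβ : ∀ j u, α j ≠ β (Fin.castAdd t u))
    (hκ : Fintype.card κ ≤ t) (x : Fin ℓ → F) (y : κ → F) :
    ∃ z : Fin t → F, ∀ j, (lccEncode β x z).eval (α j) = y j := by
  classical
  let node : Fin ℓ ⊕ κ → F := Sum.elim (fun u => β (Fin.castAdd t u)) α
  have node_injective : Function.Injective node :=
    (hβ.comp (Fin.castAdd_injective ℓ t)).sumElim hα fun u j => (hαβ j u).symm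
  let p : F[X] := Lagrange.interpolate Finset.univ node (Sum.elim x y)
  have eval_p (i : Fin ℓ ⊕ κ) : p.eval (node i) = Sum.elim x y i :=
    Lagrange.eval_interpolate_at_node _ node_injective.injOn (Finset.mem_univ i)
  have degree_p : p.degree < (ℓ + t : ℕ) := by
    refine (Lagrange.degree_interpolate_lt _ node_injective.injOn).trans_le ?_
    rw [Finset.card_univ, Fintype.card_sum, Fintype.card_fin]
    exact_mod_cast Nat.add_le_add_left hκ ℓ
  have data_p : (fun u => p.eval (β (Fin.castAdd t u))) = x := funext fun u => eval_p (.inl u)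
  refine ⟨fun u => p.eval (β (Fin.natAdd ℓ u)), fun j => ?_⟩
  rw [← data_p, lccEncode_eval_nodes hβ degree_p]
  exact eval_p (.inr j)

variable (β α)

/-- The shares of zero data at the points `α`, as an additive function of the noise: the linear
part of the affine function sending the noise to the shares of arbitrary data. -/
noncomputable def noiseShares : (Fin t → F) →+ (κ → F) :=
  AddMonoidHom.mk' (fun z j => (lccEncode β 0 z).eval (α j)) fun z w => by
    ext j
    simpa using congrArg (eval (α j)) (lccEncode_add β 0 0 z w)

theorem eval_lccEncode_eq_add_noiseShares (x : Fin ℓ → F) (z : Fin t → F) (j : κ) :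
    (lccEncode β x z).eval (α j) = (lccEncode β x 0).eval (α j) + noiseShares β α z j := by
  simpa [noiseShares] using congrArg (eval (α j)) (lccEncode_add β x 0 0 z)

end Encoding

theorem secfc_shares_uniform_general {F κ : Type*} [Field F] [Fintype F] [Fintype κ]
    [DecidableEq κ] {ℓ t : ℕ} {β : Fin (ℓ + t) → F} (hβ : Function.Injective β) {α : κ → F}
    (hα : Function.Injective α) (hαβ : ∀ j u, α j ≠ β (Fin.castAdd t u))
    (hκ : Fintype.card κ ≤ t) (x : Fin ℓ → F) :
    PMF.map (fun (z : Fin t → F) (j : κ) => (lccEncode β x z).eval (α j))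
        (PMF.uniformOfFintype (Fin t → F))
      = PMF.uniformOfFintype (κ → F) := by
  have noiseShares_surjective : Function.Surjective (noiseShares β α) := fun y =>
    (exists_noise_eval_lccEncode_eq hβ hα hαβ hκ 0 y).imp fun _ hz => funext hz
  have shares_affine : (fun (z : Fin t → F) (j : κ) => (lccEncode β x z).eval (α j))
      = fun z => (fun j => (lccEncode β x 0).eval (α j)) + noiseShares β α z :=
    funext₂ (eval_lccEncode_eq_add_noiseShares β α x)
  rw [shares_affine]
  exact map_const_add_uniformOfFintype _ noiseShares_surjective _

/-- Data `t`-privacy of SecFC, distributional form: for any data `x` and any set `C`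
of at most `t` colluding clients, if the noise is uniform on `𝔽_q^t` then the tuple of
shares of the clients in `C` is uniform on `𝔽_q^C` (hence independent of `x`). -/
theorem secfc_shares_uniform
    {F : Type*} [Field F] [Fintype F]
    (ℓ t n : ℕ) (hℓ : 0 < ℓ) (ht : 0 < t) (hn : 0 < n)
    (β : Fin (ℓ + t) → F) (hβ : Function.Injective β)
    (α : Fin n → F) (hα : Function.Injective α)
    (hαβ : ∀ j u, α j ≠ β u)
    (x : Fin ℓ → F)
    (C : Finset (Fin n)) (hC : C.card ≤ t) :
    PMF.map (fun (z : Fin t → F) (j : C) => (lccEncode β x z).eval (α (j : Fin n)))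
        (PMF.uniformOfFintype (Fin t → F))
      = PMF.uniformOfFintype (C → F) := by
  exact secfc_shares_uniform_general hβ (hα.comp Subtype.val_injective)
    (fun j u => hαβ j.1 (Fin.castAdd t u)) ((Fintype.card_coe C).trans_le hC) x
end

section
/- (Exact coded-distance recovery; universal-performance part of Theorem 1.) Assume n ≥ 2ℓ + 2t − 1. For each data point i ∈ {1,…,m} with segments x_{i,u} ∈ 𝔽_q^r (u ∈ {1,…,ℓ}) and noises z_{i,u} ∈ 𝔽_q^r (u ∈ {1,…,t}), let f_{i,s} (s ∈ {1,…,r}) be the unique polynomial of degree at most ℓ+t−1 with f_{i,s}(β_u) equal to the s-th coordinate of x_{i,u} for u ∈ {1,…,ℓ} and f_{i,s}(β_{ℓ+u}) equal to the s-th coordinate of z_{i,u} for u ∈ {1,…,t}. Fix a subset S ⊆ {1,…,m}, let c ∈ 𝔽_q be the image of the natural number |S| in 𝔽_q, and fix i ∈ {1,…,m}. Then any polynomial ψ over 𝔽_q of degree at most 2ℓ+2t−2 satisfying ψ(α_j) = Σ_{s=1}^r ( Σ_{i'∈S} f_{i',s}(α_j) − c·f_{i,s}(α_j) )² for all j ∈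 {1,…,n} satisfies Σ_{u=1}^ℓ ψ(β_u) = Σ_{u=1}^ℓ Σ_{s=1}^r ( Σ_{i'∈S} x_{i',u,s} − c·x_{i,u,s} )², where x_{i,u,s} denotes the s-th coordinate of the segment x_{i,u}; that is, the server's decoded value equals the squared distance ‖Σ_{i'∈S} x_{i'} − |S|·x_i‖² of the original (unsegmented) data computed in 𝔽_q, independently of the noise values. -/
open Polynomial

/-!
Encoding is linear, so `Σ_{i'∈S} f_{i'} - c·f_i` is itself the encoding of the displacement
`Σ_{i'∈S} x_{i'} - c·x_i`. The coded squared distance is thus the value at `α_j` of a sum of squares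
of encodings, a polynomial of degree at most `2(ℓ+t-1)`. The `n > 2(ℓ+t-1)` distinct points `α_j`
force `ψ` to be this polynomial, and at `β_u` with `u ≤ ℓ` each encoding takes its data value, so
the noise disappears.
-/

/-- The encoding as a linear map: data and noise, taken as a pair, go to their encoding polynomial.
It lets a linear combination of encodings be read as the encoding of a linear combination. -/
@[simps]
noncomputable def lccEncodeLinearMap {F : Type*} [Field F] {ℓ t : ℕ} (β : Fin (ℓ + t) → F) :
    (Fin ℓ → F) × (Fin t → F) →ₗ[F] F[X] where
  toFun p := lccEncode β p.1 p.2
  map_add' p q := by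
    have append_add : Fin.append (p + q).1 (p + q).2 = Fin.append p.1 p.2 + Fin.append q.1 q.2 := by
      ext v
      refine Fin.addCases (fun u => ?_) (fun u => ?_) v <;> simp
    simp only [lccEncode, append_add, map_add]
  map_smul' a p := by
    have append_smul : Fin.append (a • p).1 (a • p).2 = a • Fin.append p.1 p.2 := by
      ext v
      refine Fin.addCases (fun u => ?_) (fun u => ?_) v <;> simp
    simp only [lccEncode, append_smul, map_smul, RingHom.id_apply]

section Encoding

variable {F : Type*} [Field F] {ℓ t : ℕ} {β : Fin (ℓ + t) → F}

theorem natDegree_lccEncode_le (hβ : Function.Injective β) (x : Fin ℓ → F) (z : Fin t → F) :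
    (lccEncode β x z).natDegree ≤ ℓ + t - 1 := by
  simpa only [lccEncode, Finset.card_univ, Fintype.card_fin] using natDegree_le_of_degree_le
    (Lagrange.degree_interpolate_le (s := Finset.univ) (Fin.append x z) hβ.injOn)

theorem eval_lccEncode_castAdd (hβ : Function.Injective β) (x : Fin ℓ → F) (z : Fin t → F)
    (u : Fin ℓ) : (lccEncode β x z).eval (β (Fin.castAdd t u)) = x u :=
  (Lagrange.eval_interpolate_at_node _ hβ.injOn (Finset.mem_univ _)).trans (Fin.append_left x z u)

end Encoding

theorem eq_sum_pow_of_eval_eq {R κ σ : Type*} [CommRing R] [IsDomain R] [Fintype κ] [Fintype σ]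
    {α : κ → R} (hα : Function.Injective α) {d k : ℕ} (hcard : k * d < Fintype.card κ)
    {ψ : R[X]} (hψdeg : ψ.natDegree ≤ k * d) {p : σ → R[X]} (hp : ∀ s, (p s).natDegree ≤ d)
    (hψ : ∀ j, ψ.eval (α j) = ∑ s, (p s).eval (α j) ^ k) : ψ = ∑ s, p s ^ k := by
  have hsum : (∑ s, p s ^ k).natDegree ≤ k * d :=
    natDegree_sum_le_of_forall_le _ _ fun s _ => natDegree_pow_le_of_le k (hp s)
  refine eq_of_natDegree_lt_card_of_eval_eq _ _ hα (fun j => ?_)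
    ((max_le hψdeg hsum).trans_lt hcard)
  simp only [hψ, eval_finsetSum, eval_pow]

theorem secfc_exact_recovery_general {F ι κ σ : Type*} [Field F] [Fintype κ] [Fintype σ]
    {ℓ t : ℕ} (hcard : 2 * ℓ + 2 * t - 1 ≤ Fintype.card κ)
    {β : Fin (ℓ + t) → F} (hβ : Function.Injective β)
    {α : κ → F} (hα : Function.Injective α)
    (x : ι → Fin ℓ → σ → F) (z : ι → Fin t → σ → F) (S : Finset ι) (i : ι) (c : F)
    {ψ : F[X]} (hψdeg : ψ.degree ≤ ((2 * ℓ + 2 * t - 2 : ℕ) : WithBot ℕ))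
    (hψ : ∀ j, ψ.eval (α j) =
      ∑ s, ((∑ k ∈ S, (lccEncode β (fun u => x k u s) (fun u => z k u s)).eval (α j))
        - c * (lccEncode β (fun u => x i u s) (fun u => z i u s)).eval (α j)) ^ 2)
    (u : Fin ℓ) :
    ψ.eval (β (Fin.castAdd t u)) = ∑ s, ((∑ k ∈ S, x k u s) - c * x i u s) ^ 2 := by
  have hℓ : 0 < ℓ := u.pos
  let xz (k : ι) (s : σ) : (Fin ℓ → F) × (Fin t → F) := (fun v => x k v s, fun v => z k v s)
  let displacement (s : σ) : (Fin ℓ → F) × (Fin t → F) := ∑ k ∈ S, xz k s - c • xz i s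
  have eval_encode (s : σ) (a : F) : (lccEncode β (displacement s).1 (displacement s).2).eval a =
      ∑ k ∈ S, (lccEncode β (xz k s).1 (xz k s).2).eval a
        - c * (lccEncode β (xz i s).1 (xz i s).2).eval a := by
    simp only [displacement, ← lccEncodeLinearMap_apply, map_sub, map_sum, map_smul, eval_sub,
      eval_finsetSum, eval_smul, smul_eq_mul]
  have hψ_eq : ψ = ∑ s, lccEncode β (displacement s).1 (displacement s).2 ^ 2 :=
    eq_sum_pow_of_eval_eq hα (d := ℓ + t - 1) (by omega)
      ((natDegree_le_of_degree_le hψdeg).trans (by omega))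
      (fun s => natDegree_lccEncode_le hβ _ _) fun j => by simpa only [eval_encode] using hψ j
  simp only [hψ_eq, eval_finsetSum, eval_pow, eval_encode, eval_lccEncode_castAdd hβ, xz]

/-- Exact coded-distance recovery (universal-performance part of Theorem 1): with
`n ≥ 2ℓ+2t-1` clients, any polynomial `ψ` of degree at most `2ℓ+2t-2` agreeing with
the clients' coded distances at all evaluation points `α_j` decodes, via
`Σ_{u≤ℓ} ψ(β_u)`, exactly to the squared distance `‖Σ_{i'∈S} x_{i'} - |S|·x_i‖²` of
the original (unsegmented) data in `𝔽_q`, independently of the noise values. -/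
theorem secfc_exact_recovery
    {F : Type*} [Field F] [Fintype F]
    (ℓ t n r m : ℕ) (hℓ : 0 < ℓ) (ht : 0 < t) (hn : 0 < n) (hr : 0 < r) (hm : 0 < m)
    (hcard : 2 * ℓ + 2 * t - 1 ≤ n)
    (β : Fin (ℓ + t) → F) (hβ : Function.Injective β)
    (α : Fin n → F) (hα : Function.Injective α)
    (hαβ : ∀ j u, α j ≠ β u)
    (x : Fin m → Fin ℓ → Fin r → F) (z : Fin m → Fin t → Fin r → F)
    (S : Finset (Fin m)) (i : Fin m)
    (ψ : F[X]) (hψdeg : ψ.degree ≤ ((2 * ℓ + 2 * t - 2 : ℕ) : WithBot ℕ))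
    (hψ : ∀ j : Fin n, ψ.eval (α j) =
      ∑ s : Fin r,
        ((∑ i' ∈ S, (lccEncode β (fun u => x i' u s) (fun u => z i' u s)).eval (α j))
          - (S.card : F) * (lccEncode β (fun u => x i u s) (fun u => z i u s)).eval (α j)) ^ 2) :
    ∑ u : Fin ℓ, ψ.eval (β (Fin.castAdd t u))
      = ∑ u : Fin ℓ, ∑ s : Fin r,
          ((∑ i' ∈ S, x i' u s) - (S.card : F) * x i u s) ^ 2 :=
  Finset.sum_congr rfl fun u _ =>
    secfc_exact_recovery_general (by simpa using hcard) hβ hα x z S i S.card hψdeg hψ u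
end
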